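/- arXiv:1709.03037 — 4 statements merged into one kernel-verified Lean document; each statement's English description precedes it below -/
import Mathlib

section
/- Let n ≥ 1 and let a, b be nonzero real numbers with a ≠ −b. Define P_V(z) := a(z^{2n} + 1) + b·Σ_{j=1}^{2n−1} (−1)^{j+1} z^j. Then P_V is a real self-reciprocal polynomial of degree 2n and for every nonzero complex z, P_V(z) = z^n · ( a·V_n(x) + (a+b)·V_{n−1}(x) ) where x = (z + z⁻¹)/2 and V_k(x) := U_k(x) − U_{k−1}(x). -/
open Polynomial

/-!
If `2 z x = z² + 1`, that is `x = (z + z⁻¹) / 2`, the three-term recurrence gives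
`zⁿ Vₙ(x) = 1 - z + z² - ⋯ + z²ⁿ =: Gₙ(z)`. The inner sum of `P_V` is `z Gₙ₋₁(z)`, while
`z²ⁿ + 1 = Gₙ(z) + z Gₙ₋₁(z)`, so `P_V = a Gₙ + (a + b) z Gₙ₋₁`.
-/

section AlternatingPoly

variable {R : Type*} [Ring R]

/-- The polynomial `P_V`, over an arbitrary ring. For `n = 0` the sum is empty because `2 * n - 1`
is truncated, and both outer terms are constant. -/
noncomputable def alternatingPoly (n : ℕ) (a b : R) : R[X] :=
  C a * (X ^ (2 * n) + 1) + C b * ∑ j ∈ Finset.Icc 1 (2 * n - 1), C ((-1 : R) ^ (j + 1)) * X ^ j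

theorem coeff_alternatingPoly (n : ℕ) (a b : R) (i : ℕ) :
    (alternatingPoly n a b).coeff i =
      a * ((if i = 2 * n then 1 else 0) + if i = 0 then 1 else 0) +
        b * if i ∈ Finset.Icc 1 (2 * n - 1) then (-1) ^ (i + 1) else 0 := by
  simp only [alternatingPoly, coeff_add, coeff_C_mul, coeff_X_pow, coeff_one, finsetSum_coeff,
    mul_ite, mul_one, mul_zero, Finset.sum_ite_eq]

theorem natDegree_alternatingPoly {n : ℕ} (hn : 1 ≤ n) {a : R} (ha : a ≠ 0) (b : R) :
    (alternatingPoly n a b).natDegree = 2 * n := by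
  refine natDegree_eq_of_le_of_coeff_ne_zero (natDegree_le_iff_coeff_eq_zero.2 fun i hi => ?_) ?_
  · have h_mid : i ∉ Finset.Icc 1 (2 * n - 1) := by grind
    simp [coeff_alternatingPoly, h_mid, show i ≠ 2 * n by lia, show i ≠ 0 by lia]
  · have h_mid : 2 * n ∉ Finset.Icc 1 (2 * n - 1) := by grind
    simpa [coeff_alternatingPoly, h_mid, show n ≠ 0 by lia] using ha

theorem coeff_alternatingPoly_two_mul_sub (n : ℕ) (a b : R) {i : ℕ} (hi : i ≤ 2 * n) :
    (alternatingPoly n a b).coeff (2 * n - i) = (alternatingPoly n a b).coeff i := by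
  have h_top : 2 * n - i = 2 * n ↔ i = 0 := by grind
  have h_bot : 2 * n - i = 0 ↔ i = 2 * n := by lia
  have h_mid : 2 * n - i ∈ Finset.Icc 1 (2 * n - 1) ↔ i ∈ Finset.Icc 1 (2 * n - 1) := by grind
  have h_sign : (-1 : R) ^ (2 * n - i + 1) = (-1) ^ (i + 1) := neg_one_pow_congr (by grind)
  simp only [coeff_alternatingPoly, h_top, h_bot, h_mid, h_sign]
  rw [add_comm (if i = 0 then (1 : R) else 0)]

end AlternatingPoly

section ChebyshevV

variable {A : Type*} [CommRing A]

variable (A) in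
/-- The Chebyshev polynomial of the third kind `V_k`, indexed by `ℤ` as `Polynomial.Chebyshev.U`
is, so that `V_{-1} = 1`. -/
noncomputable def chebyshevV (k : ℤ) : A[X] :=
  Chebyshev.U A k - Chebyshev.U A (k - 1)

theorem chebyshevV_zero : chebyshevV A 0 = 1 := by
  simp [chebyshevV]

theorem chebyshevV_one : chebyshevV A 1 = 2 * X - 1 := by
  simp [chebyshevV]

theorem chebyshevV_add_two (k : ℤ) :
    chebyshevV A (k + 2) = 2 * X * chebyshevV A (k + 1) - chebyshevV A k := by
  have h_shift : Chebyshev.U A (k + 1) = 2 * X * Chebyshev.U A k - Chebyshev.U A (k - 1) :=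
    Chebyshev.U_add_one A k
  rw [chebyshevV, chebyshevV, chebyshevV, Chebyshev.U_add_two, show k + 2 - 1 = k + 1 by ring,
    add_sub_cancel_right]
  linear_combination -h_shift

theorem geom_sum_add_four (w : A) (N : ℕ) :
    ∑ j ∈ Finset.range (N + 4), w ^ j =
      (w ^ 2 + 1) * ∑ j ∈ Finset.range (N + 2), w ^ j - w ^ 2 * ∑ j ∈ Finset.range N, w ^ j := by
  simp only [geom_sum_succ]
  ring

theorem pow_mul_eval_chebyshevV {z x : A} (hx : 2 * z * x = z ^ 2 + 1) (n : ℕ) :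
    z ^ n * (chebyshevV A n).eval x = ∑ j ∈ Finset.range (2 * n + 1), (-z) ^ j := by
  induction n using Nat.twoStepInduction with
  | zero => simp [chebyshevV_zero]
  | one =>
    simp only [Nat.cast_one, chebyshevV_one, eval_sub, eval_mul, eval_ofNat, eval_X, eval_one,
      Finset.sum_range_succ, Finset.sum_range_zero]
    linear_combination hx
  | more n ih ih_succ =>
    have h_rec : (chebyshevV A (n + 2 : ℕ)).eval x =
        2 * x * (chebyshevV A (n + 1 : ℕ)).eval x - (chebyshevV A n).eval x := by
      push_cast
      simp [chebyshevV_add_two]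
    calc z ^ (n + 2) * (chebyshevV A (n + 2 : ℕ)).eval x
        = (2 * z * x) * (z ^ (n + 1) * (chebyshevV A (n + 1 : ℕ)).eval x)
            - z ^ 2 * (z ^ n * (chebyshevV A n).eval x) := by rw [h_rec]; ring
      _ = ((-z) ^ 2 + 1) * ∑ j ∈ Finset.range (2 * n + 1 + 2), (-z) ^ j
            - (-z) ^ 2 * ∑ j ∈ Finset.range (2 * n + 1), (-z) ^ j := by
          rw [hx, ih, ih_succ, neg_sq, show 2 * (n + 1) + 1 = 2 * n + 1 + 2 by ring]
      _ = ∑ j ∈ Finset.range (2 * (n + 2) + 1), (-z) ^ j := by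
          rw [← geom_sum_add_four, show 2 * (n + 2) + 1 = 2 * n + 1 + 4 by ring]

end ChebyshevV

section Evaluation

variable {R A : Type*} [CommRing R] [CommRing A] [Algebra R A]

theorem sum_Icc_neg_one_pow_mul_pow (z : A) (N : ℕ) :
    ∑ j ∈ Finset.Icc 1 N, (-1) ^ (j + 1) * z ^ j = z * ∑ j ∈ Finset.range N, (-z) ^ j := by
  rw [Finset.range_eq_Ico, Finset.mul_sum, ← Finset.Ico_add_one_right_eq_Icc,
    ← Finset.sum_Ico_add' _ 0 N 1]
  refine Finset.sum_congr rfl fun j _ => ?_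
  rw [neg_pow z]
  ring

theorem geom_sum_neg_add_mul_geom_sum_neg (z : A) (n : ℕ) :
    ∑ j ∈ Finset.range (2 * (n + 1) + 1), (-z) ^ j + z * ∑ j ∈ Finset.range (2 * n + 1), (-z) ^ j =
      z ^ (2 * (n + 1)) + 1 := by
  have h_even : (-z) ^ (2 * (n + 1)) = z ^ (2 * (n + 1)) := (even_two_mul _).neg_pow z
  rw [Finset.sum_range_succ, h_even, show 2 * (n + 1) = 2 * n + 1 + 1 by ring, geom_sum_succ]
  ring

theorem aeval_alternatingPoly (n : ℕ) (a b : R) (z : A) :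
    aeval z (alternatingPoly n a b) = algebraMap R A a * (z ^ (2 * n) + 1) +
      algebraMap R A b * (z * ∑ j ∈ Finset.range (2 * n - 1), (-z) ^ j) := by
  simp [alternatingPoly, ← sum_Icc_neg_one_pow_mul_pow]

theorem aeval_alternatingPoly_eq_chebyshevV {n : ℕ} (hn : 1 ≤ n) (a b : R) {z x : A}
    (hx : 2 * z * x = z ^ 2 + 1) :
    aeval z (alternatingPoly n a b) =
      z ^ n * (algebraMap R A a * (chebyshevV A n).eval x +
        (algebraMap R A a + algebraMap R A b) * (chebyshevV A (n - 1)).eval x) := by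
  obtain ⟨m, rfl⟩ := Nat.exists_eq_add_of_le' hn
  have h_top := pow_mul_eval_chebyshevV hx (m + 1)
  have h_low := pow_mul_eval_chebyshevV hx m
  have h_split := geom_sum_neg_add_mul_geom_sum_neg z m
  rw [aeval_alternatingPoly, show 2 * (m + 1) - 1 = 2 * m + 1 by lia,
    show ((m + 1 : ℕ) : ℤ) - 1 = m by push_cast; ring]
  linear_combination -algebraMap R A a * h_split - algebraMap R A a * h_top
    - (algebraMap R A a + algebraMap R A b) * z * h_low

/-- The relation `2 * z * x = z ^ 2 + 1` is the division-free form of `x = (z + z⁻¹) / 2`. -/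
theorem PV_selfReciprocal_and_chebyshev_general {n : ℕ} (hn : 1 ≤ n) {a : R} (ha : a ≠ 0) (b : R) :
    (alternatingPoly n a b).natDegree = 2 * n ∧
    (∀ i ≤ 2 * n, (alternatingPoly n a b).coeff i = (alternatingPoly n a b).coeff (2 * n - i)) ∧
    (∀ z x : A, 2 * z * x = z ^ 2 + 1 →
      aeval z (alternatingPoly n a b) =
        z ^ n * (algebraMap R A a * (chebyshevV A n).eval x +
          (algebraMap R A a + algebraMap R A b) * (chebyshevV A (n - 1)).eval x)) :=
  ⟨natDegree_alternatingPoly hn ha b,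
    fun _ hi => (coeff_alternatingPoly_two_mul_sub n a b hi).symm,
    fun _ _ hx => aeval_alternatingPoly_eq_chebyshevV hn a b hx⟩

end Evaluation

/-- Let `n ≥ 1` and `a, b` be nonzero reals with `a ≠ -b`.  Then
`P_V(z) = a(z^(2n) + 1) + b Σ_{j=1}^{2n-1} (-1)^(j+1) z^j` is a real self-reciprocal
polynomial of degree `2n`, and for every nonzero complex `z`,
`P_V(z) = z^n (a V_n(x) + (a+b) V_{n-1}(x))` with `x = (z + z⁻¹)/2`, where
`V_k := U_k - U_{k-1}` is the Chebyshev polynomial of the third kind. -/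
theorem PV_selfReciprocal_and_chebyshev (n : ℕ) (hn : 1 ≤ n) (a b : ℝ)
    (ha : a ≠ 0) (hb : b ≠ 0) (hab : a ≠ -b) (PV : Polynomial ℝ)
    (hPV : PV = C a * (X ^ (2 * n) + 1)
        + C b * ∑ j ∈ Finset.Icc 1 (2 * n - 1), C ((-1 : ℝ) ^ (j + 1)) * X ^ j) :
    PV.natDegree = 2 * n ∧
    (∀ i ≤ 2 * n, PV.coeff i = PV.coeff (2 * n - i)) ∧
    (∀ z : ℂ, z ≠ 0 →
      aeval z PV = z ^ n *
        ((a : ℂ) * (Polynomial.Chebyshev.U ℂ n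
            - Polynomial.Chebyshev.U ℂ ((n : ℤ) - 1)).eval ((z + z⁻¹) / 2)
          + ((a : ℂ) + (b : ℂ)) * (Polynomial.Chebyshev.U ℂ ((n : ℤ) - 1)
            - Polynomial.Chebyshev.U ℂ ((n : ℤ) - 2)).eval ((z + z⁻¹) / 2))) := by
  obtain rfl : PV = alternatingPoly n a b := hPV
  obtain ⟨h_deg, h_symm, h_eval⟩ := PV_selfReciprocal_and_chebyshev_general (A := ℂ) hn ha b
  refine ⟨h_deg, h_symm, fun z hz => ?_⟩
  simpa only [chebyshevV, sub_sub, one_add_one_eq_two, Complex.coe_algebraMap] using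
    h_eval z ((z + z⁻¹) / 2) (by field_simp)
end

section
/- Let n ≥ 2 and let c be a nonzero real number, and set R(x) := T_n(x) − c·T_{n−1}(x). Then: (i) all n complex zeros of R are real and simple, and at most one of them lies outside the open interval (−1, 1); (ii) if −1 < c < 1, then all zeros of R lie in (−1, 1); (iii) if c < −1, then the smallest zero of R is less than −1; (iv) if c > 1, then the largest zero of R is greater than 1. -/
open Polynomial

/-!
At a zero `cos θ` of `T_{n-1}` the polynomial `T_n - c T_{n-1}` takes the value `T_n(cos θ)`, which
is independent of `c`, does not vanish, and alternates in sign from one zero to the next. Together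
with the behaviour at `±∞` this puts exactly one zero of `T_n - c T_{n-1}` in each of the `n`
intervals cut out by the zeros of `T_{n-1}`, so only the two extreme zeros can leave `(-1, 1)`. On
which side of `1` and `-1` they lie is read off the values `1 - c` and `(-1)^n (1 + c)` there.
-/

section SignSub

variable {K : Type*} [AddCommGroup K] [LinearOrder K] [IsOrderedAddMonoid K] {a b c d : K}

theorem lt_iff_lt_of_sign_sub_eq (h : SignType.sign (b - a) = SignType.sign (d - c)) :
    a < b ↔ c < d := by
  rw [← sub_pos, ← sign_eq_one_iff, h, sign_eq_one_iff, sub_pos]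

theorem gt_iff_gt_of_sign_sub_eq (h : SignType.sign (b - a) = SignType.sign (d - c)) :
    b < a ↔ d < c := by
  rw [← sub_neg, ← sign_eq_neg_one_iff, h, sign_eq_neg_one_iff, sub_neg]

end SignSub

/-- The increasing points `v` are interlaced by the points `x`:
`x 0 < v 0 < x 1 < v 1 < ⋯ < v (m - 1) < x m`. For `m = 0` this says nothing about `x 0`. -/
def Interlaces {α : Type*} [LT α] {m : ℕ} (x : Fin (m + 1) → α) (v : Fin m → α) : Prop :=
  ∀ j, x j.castSucc < v j ∧ v j < x j.succ

namespace Interlaces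

section Preorder

variable {α : Type*} [Preorder α] {m : ℕ} {x : Fin (m + 1) → α} {v : Fin m → α}

theorem strictMono (h : Interlaces x v) : StrictMono x :=
  Fin.strictMono_iff_lt_succ.2 fun j => (h j).1.trans (h j).2

theorem lt_upperBound_of_ne_last (h : Interlaces x v) {b : α} (hb : ∀ j, v j ≤ b)
    {i : Fin (m + 1)} (hi : i ≠ Fin.last m) : x i < b := by
  obtain ⟨j, rfl⟩ := Fin.exists_castSucc_eq.2 hi
  exact (h j).1.trans_le (hb j)

theorem lowerBound_lt_of_ne_zero (h : Interlaces x v) {a : α} (ha : ∀ j, a ≤ v j)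
    {i : Fin (m + 1)} (hi : i ≠ 0) : a < x i := by
  obtain ⟨j, rfl⟩ := Fin.exists_succ_eq.2 hi
  exact (ha j).trans_lt (h j).2

theorem ncard_notMem_Ioo_le_one (h : Interlaces x v) {a b : α} (ha : ∀ j, a ≤ v j)
    (hb : ∀ j, v j ≤ b) (hab : a < x 0 ∨ x (Fin.last m) < b) :
    {i | x i ∉ Set.Ioo a b}.ncard ≤ 1 := by
  rw [Set.ncard_le_one_iff_subset_singleton]
  rcases hab with h0 | hlast
  · refine ⟨Fin.last m, fun i hi => not_imp_comm.1 (fun hne => ⟨?_, ?_⟩) hi⟩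
    · exact h0.trans_le (h.strictMono.monotone (Fin.zero_le i))
    · exact h.lt_upperBound_of_ne_last hb hne
  · refine ⟨0, fun i hi => not_imp_comm.1 (fun hne => ⟨?_, ?_⟩) hi⟩
    · exact h.lowerBound_lt_of_ne_zero ha hne
    · exact (h.strictMono.monotone (Fin.le_last i)).trans_lt hlast

end Preorder

section OrderedRing

variable {K : Type*} [CommRing K] [LinearOrder K] [IsStrictOrderedRing K]
  {m : ℕ} {x : Fin (m + 1) → K} {v : Fin m → K}

theorem sign_prod_upperBound_sub (h : Interlaces x v) {b : K} (hb : ∀ j, v j ≤ b) :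
    SignType.sign (∏ i, (b - x i)) = SignType.sign (b - x (Fin.last m)) := by
  have hpos : 0 < ∏ j : Fin m, (b - x j.castSucc) := Finset.prod_pos fun j _ =>
    sub_pos.2 (h.lt_upperBound_of_ne_last hb (Fin.castSucc_ne_last j))
  rw [Fin.prod_univ_castSucc, sign_mul, sign_pos hpos, one_mul]

theorem sign_prod_sub_lowerBound (h : Interlaces x v) {a : K} (ha : ∀ j, a ≤ v j) :
    SignType.sign (∏ i, (x i - a)) = SignType.sign (x 0 - a) := by
  have hpos : 0 < ∏ j : Fin m, (x j.succ - a) := Finset.prod_pos fun j _ =>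
    sub_pos.2 (h.lowerBound_lt_of_ne_zero ha (Fin.succ_ne_zero j))
  rw [Fin.prod_univ_succ, sign_mul, sign_pos hpos, mul_one]

end OrderedRing

end Interlaces

theorem eq_C_leadingCoeff_mul_prod_of_injective_of_eval_eq_zero {K ι : Type*} [CommRing K]
    [IsDomain K] [Fintype ι] {P : K[X]} {x : ι → K} (hdeg : P.degree = Fintype.card ι)
    (hx : Function.Injective x) (hroot : ∀ i, P.eval (x i) = 0) :
    P = C P.leadingCoeff * ∏ i, (X - C (x i)) := by
  have hP : P ≠ 0 := by
    rintro rfl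
    simp at hdeg
  refine eq_of_degree_le_of_eval_index_eq Finset.univ hx.injOn hdeg.le ?_ ?_ fun i _ => ?_
  · rw [degree_C_mul (leadingCoeff_ne_zero.2 hP), hdeg, degree_prod]
    simp
  · simp [leadingCoeff_prod]
  · rw [hroot, eval_mul, eval_prod, Finset.prod_eq_zero (Finset.mem_univ i) (by simp), mul_zero]

section SignChanges

variable {f : ℝ → ℝ}

theorem exists_eq_zero_of_neg_one_pow_mul_pos (hf : Continuous f) {a b : ℝ} (hab : a ≤ b) {k : ℕ}
    (ha : 0 < (-1) ^ (k + 1) * f a) (hb : 0 < (-1) ^ k * f b) : ∃ t ∈ Set.Ioo a b, f t = 0 := by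
  have ha' : (-1) ^ k * f a < 0 := by
    rw [pow_succ] at ha
    linarith
  obtain ⟨t, ht, hft⟩ := intermediate_value_Ioo hab (f := fun t => (-1) ^ k * f t)
    (by fun_prop) ⟨ha', hb⟩
  exact ⟨t, ht, by simpa using hft⟩

-- The exponent `j.rev + 1` is the number of zeros found to the right of `v j`.
theorem exists_interlaces_eq_zero_of_alternating (hf : Continuous f) {m : ℕ} {v : Fin m → ℝ}
    {l r : ℝ} (hlr : l < r) (hv : StrictMono v) (hvlr : ∀ j, v j ∈ Set.Ioo l r)
    (hl : 0 < (-1) ^ (m + 1) * f l) (hr : 0 < f r)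
    (hsign : ∀ j : Fin m, 0 < (-1) ^ (j.rev + 1 : ℕ) * f (v j)) :
    ∃ x : Fin (m + 1) → ℝ, Interlaces x v ∧ ∀ i, f (x i) = 0 := by
  -- The `i`-th of the `m + 1` intervals into which `v` divides `(l, r)` is `(a i, b i)`.
  let a : Fin (m + 1) → ℝ := Fin.cons l v
  let b : Fin (m + 1) → ℝ := Fin.snoc v r
  have lt_b {t : ℝ} (htr : t < r) {i : Fin (m + 1)}
      (ht : ∀ j : Fin m, j.castSucc = i → t < v j) : t < b i := by
    induction i using Fin.lastCases with
    | last => simpa [b] using htr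
    | cast j => simpa [b] using ht j rfl
  have hab (i : Fin (m + 1)) : a i < b i := by
    induction i using Fin.cases with
    | zero => exact lt_b hlr fun j _ => (hvlr j).1
    | succ j =>
      refine lt_b (hvlr j).2 fun k hk => hv ?_
      rw [← Fin.castSucc_lt_castSucc_iff, hk]
      exact Fin.castSucc_lt_succ
  have ha (i : Fin (m + 1)) : 0 < (-1) ^ (i.rev + 1 : ℕ) * f (a i) := by
    induction i using Fin.cases with
    | zero => simpa [a] using hl
    | succ j => simpa [a, Fin.rev_succ] using hsign j
  have hb (i : Fin (m + 1)) : 0 < (-1) ^ (i.rev : ℕ) * f (b i) := by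
    induction i using Fin.lastCases with
    | last => simpa [b] using hr
    | cast j => simpa [b, Fin.rev_castSucc] using hsign j
  choose x hx hroot using fun i =>
    exists_eq_zero_of_neg_one_pow_mul_pos hf (hab i).le (ha i) (hb i)
  refine ⟨x, fun j => ⟨?_, ?_⟩, hroot⟩
  · simpa [b] using (hx j.castSucc).2
  · simpa [a] using (hx j.succ).1

end SignChanges

section RealPolynomial

open Filter

variable {P : ℝ[X]}

theorem eventually_eval_pos (hdeg : 0 < P.degree) (hlc : 0 < P.leadingCoeff) :
    ∀ᶠ t in atTop, 0 < P.eval t :=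
  (P.tendsto_atTop_of_leadingCoeff_nonneg hdeg hlc.le).eventually_gt_atTop 0

theorem eventually_neg_one_pow_mul_eval_neg_pos (hdeg : 0 < P.degree) (hlc : 0 < P.leadingCoeff) :
    ∀ᶠ t in atTop, 0 < (-1) ^ P.natDegree * P.eval (-t) := by
  have hsq : (-1 : ℝ) ^ P.natDegree * (-1) ^ P.natDegree = 1 := by simp [← mul_pow]
  have h := eventually_eval_pos (P := C ((-1) ^ P.natDegree) * P.comp (-X))
    (by rwa [degree_C_mul (by simp), degree_comp_neg_X])
    (by rwa [leadingCoeff_mul, leadingCoeff_C, comp_neg_X_leadingCoeff_eq, ← mul_assoc, hsq,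
      one_mul])
  simpa using h

theorem exists_interlaces_eval_eq_zero {m : ℕ} {v : Fin m → ℝ} (hdeg : P.natDegree = m + 1)
    (hlc : 0 < P.leadingCoeff) (hv : StrictMono v)
    (hsign : ∀ j : Fin m, 0 < (-1) ^ (j.rev + 1 : ℕ) * P.eval (v j)) :
    ∃ x : Fin (m + 1) → ℝ, Interlaces x v ∧ ∀ i, P.eval (x i) = 0 := by
  have hdeg_pos : 0 < P.degree := natDegree_pos_iff_degree_pos.1 (by omega)
  obtain ⟨M, hM, hneg, hpos, hvM⟩ := ((eventually_gt_atTop 0).and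
    ((eventually_neg_one_pow_mul_eval_neg_pos hdeg_pos hlc).and
      ((eventually_eval_pos hdeg_pos hlc).and
        (eventually_all.2 fun j => eventually_gt_atTop |v j|)))).exists
  exact exists_interlaces_eq_zero_of_alternating P.continuous (neg_lt_self hM) hv
    (fun j => abs_lt.1 (hvM j)) (hdeg ▸ hneg) hpos hsign

end RealPolynomial

section ChebyshevZeros

open Real

/-- The angles `θ` in `(0, π)` with `cos (m θ) = 0`, in increasing order. -/
noncomputable def chebyshevAngle (m : ℕ) (k : Fin m) : ℝ := (2 * k + 1) * π / (2 * m)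

/-- The zeros of `T_m`, in increasing order; as `cos` is decreasing on `[0, π]`, the angles are
taken in reverse. -/
noncomputable def chebyshevZero (m : ℕ) (j : Fin m) : ℝ := cos (chebyshevAngle m j.rev)

variable {m : ℕ}

theorem chebyshevAngle_mem_Ioo (k : Fin m) : chebyshevAngle m k ∈ Set.Ioo 0 π := by
  have hk : (k + 1 : ℝ) ≤ m := mod_cast k.isLt
  have hm : (0 : ℝ) < m := mod_cast k.pos
  refine ⟨by unfold chebyshevAngle; positivity, ?_⟩
  rw [chebyshevAngle, div_lt_iff₀ (by positivity), mul_comm π]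
  exact mul_lt_mul_of_pos_right (by linarith) pi_pos

theorem chebyshevAngle_strictMono : StrictMono (chebyshevAngle m) := by
  intro k l hkl
  have hm : (0 : ℝ) < m := mod_cast k.pos
  have hkl' : (k : ℝ) < l := mod_cast hkl
  unfold chebyshevAngle
  gcongr

theorem natCast_mul_chebyshevAngle (k : Fin m) : m * chebyshevAngle m k = k * π + π / 2 := by
  have hm : (m : ℝ) ≠ 0 := mod_cast k.pos.ne'
  unfold chebyshevAngle
  field_simp

theorem cos_natCast_mul_chebyshevAngle (k : Fin m) : cos (m * chebyshevAngle m k) = 0 := by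
  rw [natCast_mul_chebyshevAngle, cos_add_pi_div_two, sin_nat_mul_pi, neg_zero]

theorem sin_natCast_mul_chebyshevAngle (k : Fin m) :
    sin (m * chebyshevAngle m k) = (-1) ^ (k : ℕ) := by
  rw [natCast_mul_chebyshevAngle, sin_add_pi_div_two, cos_nat_mul_pi]

theorem chebyshevZero_strictMono : StrictMono (chebyshevZero m) := fun _ _ hij =>
  strictAntiOn_cos (Set.Ioo_subset_Icc_self (chebyshevAngle_mem_Ioo _))
    (Set.Ioo_subset_Icc_self (chebyshevAngle_mem_Ioo _))
    (chebyshevAngle_strictMono (Fin.rev_lt_rev.2 hij))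

theorem eval_T_chebyshevZero (j : Fin m) :
    (Chebyshev.T ℝ m).eval (chebyshevZero m j) = 0 := by
  rw [chebyshevZero, Chebyshev.T_real_cos, Int.cast_natCast, cos_natCast_mul_chebyshevAngle]

theorem eval_T_succ_chebyshevZero (j : Fin m) :
    (Chebyshev.T ℝ (m + 1 : ℕ)).eval (chebyshevZero m j) =
      (-1) ^ (j.rev + 1 : ℕ) * sin (chebyshevAngle m j.rev) := by
  rw [chebyshevZero, Chebyshev.T_real_cos, Int.cast_natCast, Nat.cast_succ, add_one_mul, cos_add,
    cos_natCast_mul_chebyshevAngle, sin_natCast_mul_chebyshevAngle]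
  ring

end ChebyshevZeros

/-- The quasi-orthogonal polynomial `T_n - c T_{n-1}` of order one. -/
noncomputable def quasiChebyshevT (K : Type*) [CommRing K] (n : ℤ) (c : K) : K[X] :=
  Chebyshev.T K n - C c * Chebyshev.T K (n - 1)

section QuasiChebyshevT

section CommRing

variable {K : Type*} [CommRing K]

theorem quasiChebyshevT_eval_one (n : ℤ) (c : K) : (quasiChebyshevT K n c).eval 1 = 1 - c := by
  simp [quasiChebyshevT]

theorem quasiChebyshevT_eval_neg_one (n : ℤ) (c : K) :
    (quasiChebyshevT K n c).eval (-1) = n.negOnePow * (1 + c) := by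
  simp only [quasiChebyshevT, eval_sub, eval_mul, eval_C, Chebyshev.T_eval_neg_one,
    Int.negOnePow_sub, Int.negOnePow_one, Units.val_mul, Units.val_neg, Units.val_one,
    Int.cast_mul, Int.cast_neg, Int.cast_one]
  ring

variable [IsDomain K] [NeZero (2 : K)] {n : ℤ}

theorem degree_C_mul_T_sub_one_lt_degree_T (hn : 0 < n) (c : K) :
    (C c * Chebyshev.T K (n - 1)).degree < (Chebyshev.T K n).degree := by
  have hle : (C c * Chebyshev.T K (n - 1)).degree ≤ (Chebyshev.T K (n - 1)).degree := by
    rw [← smul_eq_C_mul]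
    exact degree_smul_le _ _
  refine hle.trans_lt ?_
  rw [Chebyshev.degree_T, Chebyshev.degree_T, Nat.cast_lt]
  omega

theorem quasiChebyshevT_degree (hn : 0 < n) (c : K) :
    (quasiChebyshevT K n c).degree = n.natAbs := by
  rw [quasiChebyshevT, degree_sub_eq_left_of_degree_lt (degree_C_mul_T_sub_one_lt_degree_T hn c),
    Chebyshev.degree_T]

theorem quasiChebyshevT_leadingCoeff (hn : 0 < n) (c : K) :
    (quasiChebyshevT K n c).leadingCoeff = 2 ^ (n.natAbs - 1) := by
  rw [quasiChebyshevT, leadingCoeff_sub_of_degree_lt (degree_C_mul_T_sub_one_lt_degree_T hn c),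
    Chebyshev.leadingCoeff_T]

end CommRing

variable {m : ℕ} {c : ℝ}

theorem quasiChebyshevT_eval_chebyshevZero (c : ℝ) (j : Fin m) :
    (quasiChebyshevT ℝ (m + 1 : ℕ) c).eval (chebyshevZero m j) =
      (-1) ^ (j.rev + 1 : ℕ) * Real.sin (chebyshevAngle m j.rev) := by
  rw [quasiChebyshevT, eval_sub, eval_mul, eval_T_succ_chebyshevZero, Nat.cast_succ,
    add_sub_cancel_right, eval_T_chebyshevZero, mul_zero, sub_zero]

theorem exists_interlaces_chebyshevZero_quasiChebyshevT_eq_prod (m : ℕ) (c : ℝ) :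
    ∃ x : Fin (m + 1) → ℝ, Interlaces x (chebyshevZero m) ∧
      quasiChebyshevT ℝ (m + 1 : ℕ) c = C (2 ^ m) * ∏ i, (X - C (x i)) := by
  have hdeg : (quasiChebyshevT ℝ (m + 1 : ℕ) c).degree = (m + 1 : ℕ) :=
    quasiChebyshevT_degree (by omega) c
  have hlc : (quasiChebyshevT ℝ (m + 1 : ℕ) c).leadingCoeff = 2 ^ m :=
    quasiChebyshevT_leadingCoeff (by omega) c
  have hsign (j : Fin m) : 0 < (-1) ^ (j.rev + 1 : ℕ) *
      (quasiChebyshevT ℝ (m + 1 : ℕ) c).eval (chebyshevZero m j) := by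
    rw [quasiChebyshevT_eval_chebyshevZero, ← mul_assoc, ← mul_pow, neg_one_mul, neg_neg, one_pow,
      one_mul]
    exact Real.sin_pos_of_mem_Ioo (chebyshevAngle_mem_Ioo _)
  obtain ⟨x, hx, hroot⟩ := exists_interlaces_eval_eq_zero (natDegree_eq_of_degree_eq_some hdeg)
    (hlc ▸ by positivity) chebyshevZero_strictMono hsign
  refine ⟨x, hx, hlc ▸ ?_⟩
  exact eq_C_leadingCoeff_mul_prod_of_injective_of_eval_eq_zero (by simpa using hdeg)
    hx.strictMono.injective hroot

variable {x : Fin (m + 1) → ℝ}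

theorem sign_one_sub_greatest_zero (hx : Interlaces x (chebyshevZero m))
    (hprod : quasiChebyshevT ℝ (m + 1 : ℕ) c = C (2 ^ m) * ∏ i, (X - C (x i))) :
    SignType.sign (1 - x (Fin.last m)) = SignType.sign (1 - c) := by
  have heval : 1 - c = 2 ^ m * ∏ i, (1 - x i) := by
    rw [← quasiChebyshevT_eval_one, hprod]
    simp [eval_prod]
  have hpos : (0 : ℝ) < 2 ^ m := by positivity
  rw [heval, sign_mul, sign_pos hpos, one_mul,
    hx.sign_prod_upperBound_sub fun j => Real.cos_le_one _]

theorem sign_least_zero_sub_neg_one (hx : Interlaces x (chebyshevZero m))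
    (hprod : quasiChebyshevT ℝ (m + 1 : ℕ) c = C (2 ^ m) * ∏ i, (X - C (x i))) :
    SignType.sign (x 0 - -1) = SignType.sign (c - -1) := by
  have hneg : ∏ i, (-1 - x i) = (-1) ^ (m + 1) * ∏ i, (x i - -1) := by
    simpa only [neg_sub, Finset.card_univ, Fintype.card_fin] using
      Finset.prod_neg (s := Finset.univ) (f := fun i => x i - -1)
  have heval : (-1) ^ (m + 1) * (1 + c) = 2 ^ m * ∏ i, (-1 - x i) := by
    have h := quasiChebyshevT_eval_neg_one (m + 1 : ℕ) c
    rw [hprod, Int.coe_negOnePow_natCast, eval_mul, eval_prod] at h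
    simpa using h.symm
  have hc : c - -1 = 2 ^ m * ∏ i, (x i - -1) := by
    rw [hneg, mul_left_comm] at heval
    linear_combination mul_left_cancel₀ (by simp) heval
  have hpos : (0 : ℝ) < 2 ^ m := by positivity
  rw [hc, sign_mul, sign_pos hpos, one_mul,
    hx.sign_prod_sub_lowerBound fun j => Real.neg_one_le_cos _]

end QuasiChebyshevT

/-- Zeros of the first-kind Chebyshev quasi-orthogonal polynomial
`R = T_n - c T_{n-1}` of order one:  all `n` complex zeros are real and simple, at most
one lies outside `(-1,1)`; if `-1 < c < 1` all zeros lie in `(-1,1)`; if `c < -1` the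
smallest zero is `< -1`; if `c > 1` the largest zero is `> 1`. -/
theorem chebyshevT_quasiOrthogonal_zeros (n : ℕ) (hn : 2 ≤ n) (c : ℝ) (hc : c ≠ 0)
    (R : Polynomial ℝ)
    (hR : R = Polynomial.Chebyshev.T ℝ n - C c * Polynomial.Chebyshev.T ℝ ((n : ℤ) - 1)) :
    ∃ x : Fin n → ℝ, StrictMono x ∧
      R = C ((2 : ℝ) ^ (n - 1)) * ∏ i : Fin n, (X - C (x i)) ∧
      Set.ncard {i : Fin n | x i ∉ Set.Ioo (-1 : ℝ) 1} ≤ 1 ∧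
      ((-1 < c ∧ c < 1) → ∀ i, x i ∈ Set.Ioo (-1 : ℝ) 1) ∧
      (c < -1 → x ⟨0, by omega⟩ < -1) ∧
      (1 < c → 1 < x ⟨n - 1, by omega⟩) := by
  obtain ⟨m, rfl⟩ : ∃ m, n = m + 1 := ⟨n - 1, by omega⟩
  obtain ⟨x, hx, hprod⟩ := exists_interlaces_chebyshevZero_quasiChebyshevT_eq_prod m c
  have hlast := sign_one_sub_greatest_zero hx hprod
  have hzero := sign_least_zero_sub_neg_one hx hprod
  have last_lt : c < 1 → x (Fin.last m) < 1 := (lt_iff_lt_of_sign_sub_eq hlast).2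
  have lt_zero : -1 < c → -1 < x 0 := (lt_iff_lt_of_sign_sub_eq hzero).2
  refine ⟨x, hx.strictMono, hR.trans hprod, ?_, fun hc1 i => ⟨?_, ?_⟩,
    (gt_iff_gt_of_sign_sub_eq hzero).2, (gt_iff_gt_of_sign_sub_eq hlast).2⟩
  · refine hx.ncard_notMem_Ioo_le_one (fun _ => Real.neg_one_le_cos _)
      (fun _ => Real.cos_le_one _) ?_
    exact (lt_or_ge c 1).symm.imp (fun h => lt_zero (by linarith)) last_lt
  · exact (lt_zero hc1.1).trans_le (hx.strictMono.monotone (Fin.zero_le i))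
  · exact (hx.strictMono.monotone (Fin.le_last i)).trans_lt (last_lt hc1.2)
end

section
/- Let n ≥ 2 and let c be a nonzero real number, and set R(x) := U_n(x) − c·U_{n−1}(x). Then: (i) all n complex zeros of R are real and simple, and at most one of them lies outside the open interval (−1, 1); (ii) if −(n+1)/n < c < (n+1)/n, then all zeros of R lie in (−1, 1); (iii) if c < −(n+1)/n, then the smallest zero of R is less than −1; (iv) if c > (n+1)/n, then the largest zero of R is greater than 1. -/
open Polynomial

/-!
At the extremal points `cos (kπ/n)`, `0 < k < n`, of `T_n` in `(-1, 1)` the polynomial `U_{n-1}`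
vanishes, so `R = T_n + (X - c) U_{n-1}` takes the value `(-1)^k` there, whatever `c` is. Together
with the signs at `±∞`, these `n - 1` alternating values force `n` simple real zeros, interlacing
the points. Hence all zeros but the largest are `< 1`, and `R(1) = 2ⁿ ∏ (1 - xᵢ)` has the sign of
`1 - x_max`; symmetrically `(-1)ⁿ R(-1)` has the sign of `x_min + 1`. These values are
`n + 1 - cn` and `n + 1 + cn`, which are never both `≤ 0`.
-/

section AlternatingValues

variable {α 𝕜 : Type*} [ConditionallyCompleteLinearOrder α] [TopologicalSpace α] [OrderTopology α]
  [DenselyOrdered α] [Ring 𝕜] [LinearOrder 𝕜] [IsStrictOrderedRing 𝕜] [TopologicalSpace 𝕜]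
  [OrderClosedTopology 𝕜] {f : α → 𝕜}

theorem exists_mem_Ioo_eq_zero_of_mul_neg {a b : α} (hab : a ≤ b)
    (hf : ContinuousOn f (Set.Icc a b)) (hsign : f a * f b < 0) :
    ∃ x ∈ Set.Ioo a b, f x = 0 := by
  rcases mul_neg_iff.mp hsign with ⟨ha, hb⟩ | ⟨ha, hb⟩
  · exact intermediate_value_Ioo' hab hf ⟨hb, ha⟩
  · exact intermediate_value_Ioo hab hf ⟨ha, hb⟩

theorem exists_forall_mem_Ioo_eq_zero_of_alternating (hf : Continuous f) {n : ℕ}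
    {z : Fin (n + 1) → α} (hz : StrictMono z) (hsign : ∀ i, 0 < (-1) ^ (i.rev : ℕ) * f (z i)) :
    ∃ x : Fin n → α, ∀ i, x i ∈ Set.Ioo (z i.castSucc) (z i.succ) ∧ f (x i) = 0 := by
  have hgap (i : Fin n) : ∃ x ∈ Set.Ioo (z i.castSucc) (z i.succ), f x = 0 := by
    refine exists_mem_Ioo_eq_zero_of_mul_neg (hz i.castSucc_lt_succ).le hf.continuousOn ?_
    have hleft := hsign i.castSucc
    have hright := hsign i.succ
    rw [Fin.rev_castSucc, Fin.val_succ, pow_succ] at hleft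
    rw [Fin.rev_succ, Fin.val_castSucc] at hright
    rcases neg_one_pow_eq_or 𝕜 (i.rev : ℕ) with h | h <;> rw [h] at hleft hright
    · exact mul_neg_of_neg_of_pos (by simpa using hleft) (by simpa using hright)
    · exact mul_neg_of_pos_of_neg (by simpa using hleft) (by simpa using hright)
  exact Classical.skolem.mp hgap

end AlternatingValues

section ExtendTuple

variable {α : Type*} [Preorder α] {n : ℕ} {f : Fin n → α}

theorem strictMono_finCons (hf : StrictMono f) {a : α} (ha : ∀ i, a < f i) :
    StrictMono (Fin.cons a f : Fin (n + 1) → α) := by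
  intro i j hij
  cases j using Fin.cases with
  | zero => exact absurd hij (Fin.not_lt_zero i)
  | succ j =>
    cases i using Fin.cases with
    | zero => simpa using ha j
    | succ i => simpa using hf (Fin.succ_lt_succ_iff.mp hij)

theorem strictMono_finSnoc (hf : StrictMono f) {b : α} (hb : ∀ i, f i < b) :
    StrictMono (Fin.snoc f b : Fin (n + 1) → α) := by
  intro i j hij
  cases i using Fin.lastCases with
  | last => exact absurd hij (Fin.le_last j).not_gt
  | cast i =>
    cases j using Fin.lastCases with
    | last => simpa using hb i
    | cast j => simpa using hf (Fin.castSucc_lt_castSucc_iff.mp hij)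

end ExtendTuple

section SignAtInfinity

variable {𝕜 : Type*} [NormedField 𝕜] [LinearOrder 𝕜] [IsStrictOrderedRing 𝕜] [OrderTopology 𝕜]
  {p : 𝕜[X]}

theorem eventually_atTop_eval_pos (hdeg : 0 < p.degree) (hlead : 0 < p.leadingCoeff) :
    ∀ᶠ t in Filter.atTop, 0 < p.eval t :=
  (p.tendsto_atTop_of_leadingCoeff_nonneg hdeg hlead.le).eventually_gt_atTop 0

theorem eventually_atBot_neg_one_pow_natDegree_mul_eval_pos (hdeg : 0 < p.degree)
    (hlead : 0 < p.leadingCoeff) :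
    ∀ᶠ t in Filter.atBot, 0 < (-1) ^ p.natDegree * p.eval t := by
  set q : 𝕜[X] := C ((-1) ^ p.natDegree) * p.comp (-X) with hq
  have hunit : ((-1) ^ p.natDegree : 𝕜) ≠ 0 := by simp
  have hqdeg : 0 < q.degree := by
    rw [hq, degree_C_mul hunit, ← natDegree_pos_iff_degree_pos, natDegree_comp, natDegree_neg,
      natDegree_X, mul_one]
    exact natDegree_pos_iff_degree_pos.mpr hdeg
  have hqlead : 0 < q.leadingCoeff := by
    rw [hq, leadingCoeff_mul, leadingCoeff_C, leadingCoeff_comp (by simp), leadingCoeff_neg,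
      leadingCoeff_X, mul_left_comm, ← mul_pow]
    simpa using hlead
  have := Filter.tendsto_neg_atBot_atTop.eventually (eventually_atTop_eval_pos hqdeg hqlead)
  simpa [hq] using this

end SignAtInfinity

theorem exists_interlacing_roots {p : ℝ[X]} {m : ℕ} (hdeg : p.natDegree = m + 1)
    (hlead : 0 < p.leadingCoeff) {y : Fin m → ℝ} (hy : StrictMono y)
    (hsign : ∀ i, 0 < (-1) ^ (i.rev + 1 : ℕ) * p.eval (y i)) :
    ∃ x : Fin (m + 1) → ℝ, (∀ i, p.IsRoot (x i)) ∧
      ∀ i : Fin m, x i.castSucc < y i ∧ y i < x i.succ := by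
  have hpos : 0 < p.degree := natDegree_pos_iff_degree_pos.mp (by omega)
  obtain ⟨a, hpa, hay⟩ := ((eventually_atBot_neg_one_pow_natDegree_mul_eval_pos hpos hlead).and
    (Filter.eventually_all.mpr fun i => Filter.eventually_lt_atBot (y i))).exists
  obtain ⟨b, hpb, hyb, hab⟩ := ((eventually_atTop_eval_pos hpos hlead).and
    ((Filter.eventually_all.mpr fun i => Filter.eventually_gt_atTop (y i)).and
      (Filter.eventually_gt_atTop a))).exists
  set z : Fin (m + 2) → ℝ := Fin.cons a (Fin.snoc y b) with hz
  have hz_mono : StrictMono z := strictMono_finCons (strictMono_finSnoc hy hyb) <|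
    Fin.forall_fin_succ'.mpr ⟨by simpa using hay, by simpa using hab⟩
  have hz_node (i : Fin m) : z i.castSucc.succ = y i := by simp [hz]
  have hz_sign : ∀ i, 0 < (-1) ^ (i.rev : ℕ) * p.eval (z i) := by
    refine Fin.forall_fin_succ.mpr ⟨?_, Fin.forall_fin_succ'.mpr ⟨fun i => ?_, ?_⟩⟩
    · simpa [hz, hdeg] using hpa
    · simpa [hz_node, Fin.rev_succ, Fin.rev_castSucc] using hsign i
    · simpa [hz] using hpb
  obtain ⟨x, hx⟩ := exists_forall_mem_Ioo_eq_zero_of_alternating p.continuous hz_mono hz_sign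
  exact ⟨x, fun i => (hx i).2, fun i =>
    ⟨hz_node i ▸ (hx i.castSucc).1.2, hz_node i ▸ (hx i.succ).1.1⟩⟩

theorem eq_C_leadingCoeff_mul_prod_X_sub_C {A : Type*} [CommRing A] [IsDomain A] {p : A[X]}
    {ι : Type*} [Fintype ι] {x : ι → A} (hx : Function.Injective x) (hroot : ∀ i, p.IsRoot (x i))
    (hdeg : p.degree = Fintype.card ι) :
    p = C p.leadingCoeff * ∏ i, (X - C (x i)) := by
  classical
  have hroots : p.roots = (Finset.univ.map ⟨x, hx⟩).val :=
    roots_eq_of_degree_eq_card (by simpa using hroot) (by simp [hdeg])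
  have hcard : p.roots.card = p.natDegree := by
    simp [hroots, natDegree_eq_of_degree_eq_some hdeg]
  simpa [hroots] using (C_leadingCoeff_mul_prod_multiset_X_sub_C hcard).symm

section SignOfProduct

variable {A : Type*} [CommRing A] [LinearOrder A] [IsStrictOrderedRing A] {m : ℕ}
  {x : Fin (m + 1) → A} {t : A}

theorem sign_mul_of_pos_left {a : A} (ha : 0 < a) (b : A) :
    SignType.sign (a * b) = SignType.sign b := by
  rw [sign_mul, sign_pos ha, one_mul]

theorem sign_prod_sub_eq_sign_sub_last (hx : ∀ i : Fin m, x i.castSucc < t) :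
    SignType.sign (∏ i, (t - x i)) = SignType.sign (t - x (Fin.last m)) := by
  rw [Fin.prod_univ_castSucc,
    sign_mul_of_pos_left (Finset.prod_pos fun i _ => sub_pos.mpr (hx i))]

theorem sign_prod_sub_eq_sign_sub_zero (hx : ∀ i : Fin m, t < x i.succ) :
    SignType.sign (∏ i, (x i - t)) = SignType.sign (x 0 - t) := by
  rw [Fin.prod_univ_succ, mul_comm,
    sign_mul_of_pos_left (Finset.prod_pos fun i _ => sub_pos.mpr (hx i))]

end SignOfProduct

theorem lt_iff_lt_of_sign_sub_eq_sign_sub {A : Type*} [AddCommGroup A] [LinearOrder A]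
    [IsOrderedAddMonoid A] {a b c d : A}
    (h : SignType.sign (a - b) = SignType.sign (c - d)) : (b < a ↔ d < c) ∧ (a < b ↔ c < d) := by
  constructor
  · rw [← sub_pos, ← sign_eq_one_iff, h, sign_eq_one_iff, sub_pos]
  · rw [← sub_neg, ← sign_eq_neg_one_iff, h, sign_eq_neg_one_iff, sub_neg]

theorem ncard_notMem_Ioo_le_one {α : Type*} [LinearOrder α] {m : ℕ} {x : Fin (m + 1) → α}
    {a b : α} (ha : ∀ i : Fin m, a < x i.succ) (hb : ∀ i : Fin m, x i.castSucc < b)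
    (h : a < x 0 ∨ x (Fin.last m) < b) : {i | x i ∉ Set.Ioo a b}.ncard ≤ 1 := by
  rw [Set.ncard_le_one_iff_subset_singleton]
  rcases h with h | h
  · have hlt : ∀ i, a < x i := Fin.forall_fin_succ.mpr ⟨h, ha⟩
    refine ⟨Fin.last m, Fin.forall_fin_succ'.mpr ⟨fun i hi => ?_, fun _ => rfl⟩⟩
    exact absurd ⟨hlt _, hb i⟩ hi
  · have hlt : ∀ i, x i < b := Fin.forall_fin_succ'.mpr ⟨hb, h⟩
    refine ⟨0, Fin.forall_fin_succ.mpr ⟨fun _ => rfl, fun i hi => ?_⟩⟩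
    exact absurd ⟨ha i, hlt _⟩ hi

/-- The quasi-orthogonal polynomial `U_n - c U_{n-1}` of order one, whose zeros are located below.
The index ranges over `ℤ`, as for `Polynomial.Chebyshev.U`, so that `n = 0` needs no convention. -/
noncomputable def quasiChebyshevU {A : Type*} [CommRing A] (n : ℤ) (c : A) : A[X] :=
  Chebyshev.U A n - C c * Chebyshev.U A (n - 1)

namespace quasiChebyshevU

section CommRing

variable {A : Type*} [CommRing A]

theorem eq_T_add (n : ℤ) (c : A) :
    quasiChebyshevU n c = Chebyshev.T A n + (X - C c) * Chebyshev.U A (n - 1) := by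
  have h := Chebyshev.U_eq_X_mul_U_add_T A (n - 1)
  rw [sub_add_cancel] at h
  rw [quasiChebyshevU, h]
  ring

theorem eval_one (n : ℤ) (c : A) : (quasiChebyshevU n c).eval 1 = n + 1 - c * n := by
  simp [quasiChebyshevU]

theorem eval_neg_one (n : ℤ) (c : A) :
    (quasiChebyshevU n c).eval (-1) = n.negOnePow * (n + 1 + c * n) := by
  simp only [quasiChebyshevU, eval_sub, eval_mul, eval_C, Chebyshev.U_eval_neg_one,
    Int.negOnePow_sub, Int.negOnePow_one]
  push_cast
  ring

variable [IsDomain A] [NeZero (2 : A)]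

theorem degree_C_mul_U_sub_one_lt (n : ℕ) (c : A) :
    (C c * Chebyshev.U A (n - 1 : ℤ)).degree < (Chebyshev.U A n).degree := by
  rw [← smul_eq_C_mul]
  refine (degree_smul_le _ _).trans_lt ?_
  cases n with
  | zero => simp
  | succ m =>
    rw [Nat.cast_succ, add_sub_cancel_right, ← Nat.cast_succ, Chebyshev.degree_U_natCast,
      Chebyshev.degree_U_natCast]
    exact_mod_cast m.lt_succ_self

theorem degree_eq (n : ℕ) (c : A) : (quasiChebyshevU (n : ℤ) c).degree = n := by
  rw [quasiChebyshevU, degree_sub_eq_left_of_degree_lt (degree_C_mul_U_sub_one_lt n c),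
    Chebyshev.degree_U_natCast]

theorem leadingCoeff_eq (n : ℕ) (c : A) : (quasiChebyshevU (n : ℤ) c).leadingCoeff = 2 ^ n := by
  rw [quasiChebyshevU, leadingCoeff_sub_of_degree_lt (degree_C_mul_U_sub_one_lt n c),
    Chebyshev.leadingCoeff_U_natCast]

end CommRing

theorem eval_node (c : ℝ) {m k : ℕ} (hk : k < m) :
    (quasiChebyshevU ((m + 1 : ℕ) : ℤ) c).eval (Chebyshev.node (m + 1) (k + 1)) =
      (-1) ^ (k + 1) := by
  have hU : (Chebyshev.U ℝ (m : ℤ)).IsRoot (Chebyshev.node (m + 1) (k + 1)) := by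
    refine isRoot_of_mem_roots ?_
    rw [Chebyshev.roots_U_real]
    simpa [Chebyshev.node] using ⟨k, hk, rfl⟩
  have hT := Chebyshev.eval_T_real_node (Finset.mem_Iic.mpr (Nat.succ_le_succ hk.le))
  rw [eq_T_add, eval_add, hT, eval_mul, Nat.cast_succ, add_sub_cancel_right, hU.eq_zero, mul_zero,
    add_zero]

theorem exists_interlacing_zeros (m : ℕ) (c : ℝ) :
    ∃ x : Fin (m + 1) → ℝ, StrictMono x ∧
      quasiChebyshevU ((m + 1 : ℕ) : ℤ) c = C (2 ^ (m + 1)) * ∏ i, (X - C (x i)) ∧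
      ∀ i : Fin m, x i.castSucc < Chebyshev.node (m + 1) (i.rev + 1) ∧
        Chebyshev.node (m + 1) (i.rev + 1) < x i.succ := by
  have hdeg := degree_eq (m + 1) c
  have hlead := leadingCoeff_eq (m + 1) c
  have hnode : StrictMono fun i : Fin m => Chebyshev.node (m + 1) (i.rev + 1) := fun i j hij =>
    Chebyshev.node_lt (by omega) (Nat.succ_lt_succ (Fin.rev_lt_rev.mpr hij))
  obtain ⟨x, hroot, hinter⟩ := exists_interlacing_roots (natDegree_eq_of_degree_eq_some hdeg)
    (by rw [hlead]; positivity) hnode fun i => by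
      rw [eval_node c i.rev.isLt, ← mul_pow]
      norm_num
  have hx : StrictMono x :=
    Fin.strictMono_iff_lt_succ.mpr fun i => (hinter i).1.trans (hinter i).2
  refine ⟨x, hx, ?_, hinter⟩
  rw [← hlead]
  exact eq_C_leadingCoeff_mul_prod_X_sub_C hx.injective hroot (by rw [hdeg, Fintype.card_fin])

section ExtremeZeros

variable {m : ℕ} {c : ℝ} {x : Fin (m + 1) → ℝ}

theorem sign_one_sub_last
    (hprod : quasiChebyshevU ((m + 1 : ℕ) : ℤ) c = C (2 ^ (m + 1)) * ∏ i, (X - C (x i)))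
    (hx : ∀ i : Fin m, x i.castSucc < 1) :
    SignType.sign (1 - x (Fin.last m)) =
      SignType.sign ((((m + 1 : ℕ) : ℝ) + 1) / (m + 1 : ℕ) - c) := by
  have heval : 2 ^ (m + 1) * ∏ i, (1 - x i) =
      ((m + 1 : ℕ) : ℝ) * ((((m + 1 : ℕ) : ℝ) + 1) / (m + 1 : ℕ) - c) := by
    have h := eval_one ((m + 1 : ℕ) : ℤ) c
    simp only [hprod, eval_mul, eval_C, eval_prod, eval_sub, eval_X] at h
    rw [h, Int.cast_natCast]
    field
  rw [← sign_prod_sub_eq_sign_sub_last hx,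
    ← sign_mul_of_pos_left (by positivity : (0 : ℝ) < 2 ^ (m + 1)), heval,
    sign_mul_of_pos_left (by positivity)]

theorem sign_first_sub_neg_one
    (hprod : quasiChebyshevU ((m + 1 : ℕ) : ℤ) c = C (2 ^ (m + 1)) * ∏ i, (X - C (x i)))
    (hx : ∀ i : Fin m, -1 < x i.succ) :
    SignType.sign (x 0 - -1) =
      SignType.sign (c - -((((m + 1 : ℕ) : ℝ) + 1) / (m + 1 : ℕ))) := by
  have heval : 2 ^ (m + 1) * ∏ i, (x i - -1) =
      ((m + 1 : ℕ) : ℝ) * (c - -((((m + 1 : ℕ) : ℝ) + 1) / (m + 1 : ℕ))) := by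
    have h := eval_neg_one ((m + 1 : ℕ) : ℤ) c
    have hneg : ∏ i, (-1 - x i) = (-1) ^ (m + 1) * ∏ i, (x i - -1) := by
      simp only [← neg_sub (x _) (-1), Finset.prod_neg, Finset.card_univ, Fintype.card_fin]
    simp only [hprod, eval_mul, eval_C, eval_prod, eval_sub, eval_X, hneg,
      Int.coe_negOnePow_natCast] at h
    push_cast at h
    rw [mul_left_comm] at h
    rw [mul_left_cancel₀ (by simp) h]
    push_cast
    field
  rw [← sign_prod_sub_eq_sign_sub_zero hx,
    ← sign_mul_of_pos_left (by positivity : (0 : ℝ) < 2 ^ (m + 1)), heval,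
    sign_mul_of_pos_left (by positivity)]

end ExtremeZeros

end quasiChebyshevU

/-- Zeros of the second-kind Chebyshev quasi-orthogonal polynomial
`R = U_n - c U_{n-1}` of order one:  all `n` complex zeros are real and simple, at most
one lies outside `(-1,1)`; if `-(n+1)/n < c < (n+1)/n` all zeros lie in `(-1,1)`; if
`c < -(n+1)/n` the smallest zero is `< -1`; if `c > (n+1)/n` the largest zero is `> 1`. -/
theorem chebyshevU_quasiOrthogonal_zeros (n : ℕ) (hn : 2 ≤ n) (c : ℝ) (hc : c ≠ 0)
    (R : Polynomial ℝ)
    (hR : R = Polynomial.Chebyshev.U ℝ n - C c * Polynomial.Chebyshev.U ℝ ((n : ℤ) - 1)) :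
    ∃ x : Fin n → ℝ, StrictMono x ∧
      R = C ((2 : ℝ) ^ n) * ∏ i : Fin n, (X - C (x i)) ∧
      Set.ncard {i : Fin n | x i ∉ Set.Ioo (-1 : ℝ) 1} ≤ 1 ∧
      ((-(((n : ℝ) + 1) / n) < c ∧ c < ((n : ℝ) + 1) / n) →
        ∀ i, x i ∈ Set.Ioo (-1 : ℝ) 1) ∧
      (c < -(((n : ℝ) + 1) / n) → x ⟨0, by omega⟩ < -1) ∧
      (((n : ℝ) + 1) / n < c → 1 < x ⟨n - 1, by omega⟩) := by
  obtain ⟨m, rfl⟩ : ∃ m, n = m + 1 := ⟨n - 1, by omega⟩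
  obtain ⟨x, hx, hprod, hinter⟩ := quasiChebyshevU.exists_interlacing_zeros m c
  have hlt_one (i : Fin m) : x i.castSucc < 1 := (hinter i).1.trans_le Chebyshev.node_mem_Icc.2
  have hgt_neg_one (i : Fin m) : -1 < x i.succ := Chebyshev.node_mem_Icc.1.trans_lt (hinter i).2
  obtain ⟨hlast_lt, hlast_gt⟩ := lt_iff_lt_of_sign_sub_eq_sign_sub
    (quasiChebyshevU.sign_one_sub_last hprod hlt_one)
  obtain ⟨hfirst_gt, hfirst_lt⟩ := lt_iff_lt_of_sign_sub_eq_sign_sub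
    (quasiChebyshevU.sign_first_sub_neg_one hprod hgt_neg_one)
  refine ⟨x, hx, hR.trans hprod, ?_, fun h i => ⟨?_, ?_⟩, hfirst_lt.mpr, hlast_gt.mpr⟩
  · refine ncard_notMem_Ioo_le_one hgt_neg_one hlt_one ?_
    rw [hfirst_gt, hlast_lt]
    have hpos : 0 < (((m + 1 : ℕ) : ℝ) + 1) / (m + 1 : ℕ) := by positivity
    by_contra! hout
    linarith
  · exact Fin.forall_fin_succ (P := fun i => -1 < x i).mpr ⟨hfirst_gt.mpr h.1, hgt_neg_one⟩ i
  · exact Fin.forall_fin_succ' (P := fun i => x i < 1).mpr ⟨hlt_one, hlast_lt.mpr h.2⟩ i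
end

section
/- Let n ≥ 2 and let c be a nonzero real number, and let x_1 < x_2 < … < x_n be the (real, simple) zeros of R(x) := T_n(x) − c·T_{n−1}(x). Let t_1 < … < t_n denote the zeros of T_n and s_1 < … < s_{n−1} denote the zeros of T_{n−1}. If c > 0, then t_i < x_i < s_i for i = 1, …, n−1 and t_n < x_n; if c < 0, then x_1 < t_1 and s_{i−1} < x_i < t_i for i = 2, …, n. -/
open Polynomial

/-! Divided by their leading coefficients, `T_n` and `T_{n-1}` become monic polynomials `A` and `B`
with strictly interlacing zeros `t` and `s`, and nothing else about them matters for the position of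
the zeros of `P = A - c B`. Indeed `P (t i) = -c B (t i)` and `P (s i) = A (s i)`, where interlacing
makes the signs of `B (t i)` and `A (s i)` alternate with `i`. Depending on the sign of `c`, `P`
therefore changes sign on every interval `(t i, s i)` or on every interval `(s i, t (i + 1))`, and
its sign at the last or first `t` yields one more zero beyond that point. These are as many disjoint
intervals as `P` has zeros, so the `i`-th zero lies in the `i`-th interval. -/

open Lagrange (nodal eval_nodal eval_nodal_at_node)

lemma mem_of_forall_exists_mem_of_lt {ι α : Type*} [LinearOrder ι] [Finite ι] [Preorder α]
    {x : ι → α} (hx : Monotone x) {I : ι → Set α}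
    (hI : ∀ i j, i < j → ∀ a ∈ I i, ∀ b ∈ I j, a < b) (h : ∀ i, ∃ j, x j ∈ I i) (i : ι) :
    x i ∈ I i := by
  choose σ hσ using h
  have σ_strictMono : StrictMono σ := fun i j hij =>
    hx.reflect_lt (hI i j hij _ (hσ i) _ (hσ j))
  have σ_fixes : σ i = i := le_antisymm σ_strictMono.apply_le σ_strictMono.le_apply
  simpa only [σ_fixes] using hσ i

section EvalAtNode

variable {ι K : Type*} [CommRing K] {S : Finset ι} {i : ι}

lemma eval_nodal_sub_C_mul_at_node (t : ι → K) (c : K) (p : K[X]) (hi : i ∈ S) :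
    (nodal S t - C c * p).eval (t i) = -(c * p.eval (t i)) := by
  simp [eval_nodal_at_node hi]

lemma eval_sub_C_mul_nodal_at_node (s : ι → K) (c : K) (p : K[X]) (hi : i ∈ S) :
    (p - C c * nodal S s).eval (s i) = p.eval (s i) := by
  simp [eval_nodal_at_node hi]

end EvalAtNode

section SignOfNodal

variable {ι K : Type*} [CommRing K] [LinearOrder K] [IsStrictOrderedRing K]

lemma exists_neg_of_prod_neg {S : Finset ι} {f : ι → K} (h : ∏ i ∈ S, f i < 0) :
    ∃ i ∈ S, f i < 0 := by
  by_contra! hf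
  exact h.not_ge (Finset.prod_nonneg hf)

lemma exists_node_gt_of_eval_nodal_neg {S : Finset ι} {x : ι → K} {a : K}
    (h : (nodal S x).eval a < 0) : ∃ i ∈ S, a < x i := by
  rw [eval_nodal] at h
  simpa only [sub_neg] using exists_neg_of_prod_neg h

lemma exists_node_lt_of_neg_one_pow_mul_eval_nodal_neg {S : Finset ι} {x : ι → K} {a : K}
    (h : (-1) ^ S.card * (nodal S x).eval a < 0) : ∃ i ∈ S, x i < a := by
  rw [eval_nodal, ← Finset.prod_neg] at h
  simpa only [neg_sub, sub_neg] using exists_neg_of_prod_neg h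

lemma exists_node_mem_Ioo_of_eval_nodal_mul_neg {S : Finset ι} {x : ι → K} {a b : K}
    (hab : a ≤ b) (h : (nodal S x).eval a * (nodal S x).eval b < 0) :
    ∃ i ∈ S, x i ∈ Set.Ioo a b := by
  rw [eval_nodal, eval_nodal, ← Finset.prod_mul_distrib] at h
  obtain ⟨i, hi, hneg⟩ := exists_neg_of_prod_neg h
  refine ⟨i, hi, ?_⟩
  rcases mul_neg_iff.mp hneg with ⟨ha, hb⟩ | ⟨ha, hb⟩
  · exact absurd hab (by linarith)
  · exact ⟨sub_neg.mp ha, sub_pos.mp hb⟩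

lemma neg_one_pow_mul_eval_nodal_range_pos {n k : ℕ} (hk : k ≤ n) {u : ℕ → K} {y : K}
    (hlt : ∀ i < k, u i < y) (hgt : ∀ i, k ≤ i → i < n → y < u i) :
    0 < (-1) ^ (n - k) * (nodal (Finset.range n) u).eval y := by
  have flip : (-1) ^ (n - k) * ∏ i ∈ Finset.Ico k n, (y - u i) =
      ∏ i ∈ Finset.Ico k n, (u i - y) := by
    simp only [← Nat.card_Ico, ← Finset.prod_neg, neg_sub]
  rw [eval_nodal, ← Finset.prod_range_mul_prod_Ico _ hk, mul_left_comm, flip]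
  refine mul_pos (Finset.prod_pos fun i hi => ?_) (Finset.prod_pos fun i hi => ?_)
  · exact sub_pos.mpr (hlt i (Finset.mem_range.mp hi))
  · exact sub_pos.mpr (hgt i (Finset.mem_Ico.mp hi).1 (Finset.mem_Ico.mp hi).2)

end SignOfNodal

/-- Strict interlacing `t 0 < s 0 < t 1 < ⋯ < s (n - 1) < t n` of the zeros `t` of a polynomial of
degree `n + 1` with the zeros `s` of a polynomial of degree `n`. The sequences are indexed by all of
`ℕ`, and their later values are ignored. -/
def StrictlyInterlace {α : Type*} [Preorder α] (n : ℕ) (t s : ℕ → α) : Prop :=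
  ∀ i < n, t i < s i ∧ s i < t (i + 1)

namespace StrictlyInterlace

section Order

variable {α : Type*} [Preorder α] {n i j : ℕ} {t s : ℕ → α}

lemma strictMonoOn (h : StrictlyInterlace n t s) : StrictMonoOn t (Set.Iic n) :=
  strictMonoOn_Iic_of_lt_succ fun i hi => (h i hi).1.trans (h i hi).2

lemma left_lt_right (h : StrictlyInterlace n t s) (hij : i ≤ j) (hj : j < n) : t i < s j :=
  (h.strictMonoOn.monotoneOn (hij.trans hj.le) hj.le hij).trans_lt (h j hj).1

lemma right_lt_left (h : StrictlyInterlace n t s) (hij : i < j) (hj : j ≤ n) : s i < t j :=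
  (h i (hij.trans_le hj)).2.trans_le
    (h.strictMonoOn.monotoneOn (Nat.succ_le_of_lt (hij.trans_le hj)) hj hij)

end Order

variable {K : Type*} [CommRing K] [LinearOrder K] [IsStrictOrderedRing K]
  {n i : ℕ} {t s x : ℕ → K} {c : K}

lemma neg_one_pow_mul_eval_left_pos (h : StrictlyInterlace n t s) (hi : i ≤ n) :
    0 < (-1) ^ (n - i) * (nodal (Finset.range n) s).eval (t i) :=
  neg_one_pow_mul_eval_nodal_range_pos hi (fun _ hj => h.right_lt_left hj hi)
    fun _ hij hj => h.left_lt_right hij hj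

lemma neg_one_pow_mul_eval_right_pos (h : StrictlyInterlace n t s) (hi : i < n) :
    0 < (-1) ^ (n - i) * (nodal (Finset.range (n + 1)) t).eval (s i) := by
  rw [← Nat.add_sub_add_right n 1 i]
  exact neg_one_pow_mul_eval_nodal_range_pos (Nat.succ_le_succ hi.le)
    (fun _ hj => h.left_lt_right (Nat.le_of_lt_succ hj) hi)
    fun _ hij hj => h.right_lt_left hij (Nat.le_of_lt_succ hj)

lemma eval_left_mul_eval_right_pos (h : StrictlyInterlace n t s) (hi : i < n) :
    0 < (nodal (Finset.range n) s).eval (t i) *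
      (nodal (Finset.range (n + 1)) t).eval (s i) := by
  have := mul_pos (h.neg_one_pow_mul_eval_left_pos hi.le) (h.neg_one_pow_mul_eval_right_pos hi)
  rwa [mul_mul_mul_comm, ← mul_pow, neg_one_mul, neg_neg, one_pow, one_mul] at this

lemma eval_right_mul_eval_left_succ_neg (h : StrictlyInterlace n t s) (hi : i < n) :
    (nodal (Finset.range (n + 1)) t).eval (s i) *
      (nodal (Finset.range n) s).eval (t (i + 1)) < 0 := by
  have := mul_pos (h.neg_one_pow_mul_eval_right_pos hi)
    (h.neg_one_pow_mul_eval_left_pos (Nat.succ_le_of_lt hi))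
  rw [show n - i = n - (i + 1) + 1 by lia, pow_succ, mul_neg_one, neg_mul, neg_mul,
    mul_mul_mul_comm, ← mul_pow, neg_one_mul, neg_neg, one_pow, one_mul] at this
  exact neg_pos.mp this

theorem strictlyInterlace_and_left_lt_of_pos (h : StrictlyInterlace n t s) (hc : 0 < c)
    (hx : MonotoneOn x (Set.Iic n))
    (hP : nodal (Finset.range (n + 1)) x =
      nodal (Finset.range (n + 1)) t - C c * nodal (Finset.range n) s) :
    StrictlyInterlace n x s ∧ ∀ i ≤ n, t i < x i := by
  have zero_in_interval (i : Fin (n + 1)) :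
      ∃ j : Fin (n + 1), x j ∈ {y | t i < y ∧ (i < n → y < s i)} := by
    rcases i.is_le.lt_or_eq with hi | hi
    · have sign_change : (nodal (Finset.range (n + 1)) x).eval (t i) *
          (nodal (Finset.range (n + 1)) x).eval (s i) < 0 := by
        rw [hP, eval_nodal_sub_C_mul_at_node _ _ _ (Finset.mem_range_succ_iff.mpr hi.le),
          eval_sub_C_mul_nodal_at_node _ _ _ (Finset.mem_range.mpr hi), neg_mul, mul_assoc]
        exact neg_neg_of_pos (mul_pos hc (h.eval_left_mul_eval_right_pos hi))
      obtain ⟨j, hj, hj_gt, hj_lt⟩ :=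
        exists_node_mem_Ioo_of_eval_nodal_mul_neg (h i hi).1.le sign_change
      exact ⟨⟨j, Finset.mem_range.mp hj⟩, hj_gt, fun _ => hj_lt⟩
    · have neg_at_last : (nodal (Finset.range (n + 1)) x).eval (t n) < 0 := by
        rw [hP, eval_nodal_sub_C_mul_at_node _ _ _ (Finset.self_mem_range_succ n)]
        simpa using mul_pos hc (by simpa using h.neg_one_pow_mul_eval_left_pos le_rfl)
      obtain ⟨j, hj, hj_gt⟩ := exists_node_gt_of_eval_nodal_neg neg_at_last
      exact ⟨⟨j, Finset.mem_range.mp hj⟩, by simp [hi, hj_gt]⟩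
  have x_mem_interval := mem_of_forall_exists_mem_of_lt
    (x := fun j : Fin (n + 1) => x j) (fun i j hij => hx i.is_le j.is_le hij)
    (fun i j hij y hy z hz => by
      have hi : (i : ℕ) < n := lt_of_lt_of_le hij j.is_le
      exact (hy.2 hi).trans ((h.right_lt_left hij j.is_le).trans hz.1))
    zero_in_interval
  have left_lt (i : ℕ) (hi : i ≤ n) : t i < x i := (x_mem_interval ⟨i, Nat.lt_succ_of_le hi⟩).1
  have lt_right (i : ℕ) (hi : i < n) : x i < s i :=
    (x_mem_interval ⟨i, Nat.lt_succ_of_lt hi⟩).2 hi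
  exact ⟨fun i hi => ⟨lt_right i hi, (h i hi).2.trans (left_lt (i + 1) hi)⟩, left_lt⟩

theorem strictlyInterlace_and_lt_left_of_neg (h : StrictlyInterlace n t s) (hc : c < 0)
    (hx : MonotoneOn x (Set.Iic n))
    (hP : nodal (Finset.range (n + 1)) x =
      nodal (Finset.range (n + 1)) t - C c * nodal (Finset.range n) s) :
    StrictlyInterlace n x s ∧ ∀ i ≤ n, x i < t i := by
  have zero_in_interval (i : Fin (n + 1)) :
      ∃ j : Fin (n + 1), x j ∈ {y | y < t i ∧ ∀ k : ℕ, k + 1 = i → s k < y} := by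
    rcases i with ⟨_ | k, hk⟩
    · have sign_at_first : (-1) ^ (Finset.range (n + 1)).card *
          (nodal (Finset.range (n + 1)) x).eval (t 0) < 0 := by
        rw [hP, eval_nodal_sub_C_mul_at_node _ _ _ (Finset.mem_range.mpr n.succ_pos),
          Finset.card_range, pow_succ, mul_neg_one, neg_mul_neg, mul_left_comm]
        exact mul_neg_of_neg_of_pos hc (h.neg_one_pow_mul_eval_left_pos n.zero_le)
      obtain ⟨j, hj, hj_lt⟩ := exists_node_lt_of_neg_one_pow_mul_eval_nodal_neg sign_at_first
      exact ⟨⟨j, Finset.mem_range.mp hj⟩, by simpa using hj_lt⟩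
    · have hk : k < n := Nat.succ_lt_succ_iff.mp hk
      have sign_change : (nodal (Finset.range (n + 1)) x).eval (s k) *
          (nodal (Finset.range (n + 1)) x).eval (t (k + 1)) < 0 := by
        rw [hP, eval_sub_C_mul_nodal_at_node _ _ _ (Finset.mem_range.mpr hk),
          eval_nodal_sub_C_mul_at_node _ _ _ (Finset.mem_range_succ_iff.mpr hk), mul_neg,
          mul_left_comm]
        exact neg_neg_of_pos (mul_pos_of_neg_of_neg hc (h.eval_right_mul_eval_left_succ_neg hk))
      obtain ⟨j, hj, hj_gt, hj_lt⟩ :=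
        exists_node_mem_Ioo_of_eval_nodal_mul_neg (h k hk).2.le sign_change
      exact ⟨⟨j, Finset.mem_range.mp hj⟩, hj_lt, fun _ hk' => Nat.succ.inj hk' ▸ hj_gt⟩
  have x_mem_interval := mem_of_forall_exists_mem_of_lt
    (x := fun j : Fin (n + 1) => x j) (fun i j hij => hx i.is_le j.is_le hij)
    (fun i j hij y hy z hz => by
      obtain ⟨k, hk⟩ := Nat.exists_eq_add_one_of_ne_zero (Nat.ne_zero_of_lt hij)
      exact hy.1.trans ((h.left_lt_right (by lia) (by lia)).trans (hz.2 k hk.symm)))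
    zero_in_interval
  have lt_left (i : ℕ) (hi : i ≤ n) : x i < t i := (x_mem_interval ⟨i, Nat.lt_succ_of_le hi⟩).1
  have right_lt (i : ℕ) (hi : i < n) : s i < x (i + 1) :=
    (x_mem_interval ⟨i + 1, Nat.succ_lt_succ hi⟩).2 i rfl
  exact ⟨fun i hi => ⟨(lt_left i hi.le).trans (h i hi).1, right_lt i hi⟩, lt_left⟩

end StrictlyInterlace

section ChebyshevZeros

open Real

/-- The zeros of the Chebyshev polynomial `T_n` in increasing order, for `i = 0, …, n - 1`: the
usual enumeration `cos ((2 k - 1) π / (2 n))`, `k = 1, …, n`, is decreasing, so `k = n - i`. -/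
noncomputable def chebyshevTZero (n i : ℕ) : ℝ :=
  cos (((2 * (n - i) - 1 : ℕ) : ℝ) * π / (2 * n))

lemma chebyshevTZero_reflect {n k : ℕ} (hk : k < n) :
    chebyshevTZero n (n - 1 - k) = cos ((2 * k + 1) * π / (2 * n)) := by
  rw [chebyshevTZero, show 2 * (n - (n - 1 - k)) - 1 = 2 * k + 1 by lia]
  norm_cast

lemma strictlyInterlace_chebyshevTZero (n : ℕ) :
    StrictlyInterlace n (chebyshevTZero (n + 1)) (chebyshevTZero n) := by
  intro i hi
  obtain ⟨k, rfl⟩ : ∃ k, n = i + k + 1 := ⟨n - i - 1, by lia⟩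
  simp only [chebyshevTZero]
  rw [show 2 * (i + k + 1 + 1 - i) - 1 = 2 * k + 3 by lia,
    show 2 * (i + k + 1 - i) - 1 = 2 * k + 1 by lia,
    show 2 * (i + k + 1 + 1 - (i + 1)) - 1 = 2 * k + 1 by lia]
  push_cast
  constructor <;> refine cos_lt_cos_of_nonneg_of_le_pi (by positivity) ?_ ?_ <;>
    field_simp <;> linarith

lemma chebyshevT_eq_C_mul_nodal (n : ℕ) :
    Chebyshev.T ℝ n = C (2 ^ (n - 1)) * nodal (Finset.range n) (chebyshevTZero n) := by
  have roots_eq : (Chebyshev.T ℝ n).roots =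
      (Finset.range n).val.map fun k : ℕ => cos ((2 * k + 1) * π / (2 * n)) := by
    rw [Chebyshev.roots_T_real, Finset.image_val]
    exact Multiset.dedup_eq_self.mpr (Chebyshev.roots_T_real_nodup n)
  have card_roots : (Chebyshev.T ℝ n).roots.card = (Chebyshev.T ℝ n).natDegree := by
    simp [roots_eq]
  have prod_roots : ((Chebyshev.T ℝ n).roots.map fun a => X - C a).prod =
      nodal (Finset.range n) (chebyshevTZero n) := by
    rw [roots_eq, Multiset.map_map, nodal, ← Finset.prod_range_reflect]
    refine Finset.prod_congr rfl fun k hk => ?_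
    rw [chebyshevTZero_reflect (Finset.mem_range.mp hk), Function.comp_apply]
  have leading_coeff : (Chebyshev.T ℝ n).leadingCoeff = 2 ^ (n - 1) := by simp
  rw [← prod_roots, ← leading_coeff, C_leadingCoeff_mul_prod_multiset_X_sub_C card_roots]

lemma nodal_eq_of_chebyshevT_sub {m : ℕ} {c : ℝ} {x : ℕ → ℝ}
    (h : C (2 ^ (m + 1)) * nodal (Finset.range (m + 2)) x =
      Chebyshev.T ℝ (m + 2 : ℕ) - C c * Chebyshev.T ℝ (m + 1 : ℕ)) :
    nodal (Finset.range (m + 2)) x = nodal (Finset.range (m + 2)) (chebyshevTZero (m + 2)) -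
      C (c / 2) * nodal (Finset.range (m + 1)) (chebyshevTZero (m + 1)) := by
  have two_pow_ne_zero : C ((2 : ℝ) ^ (m + 1)) ≠ 0 := C_ne_zero.mpr (by positivity)
  have ratio : C c * C ((2 : ℝ) ^ m) = C (2 ^ (m + 1)) * C (c / 2) := by
    rw [← C_mul, ← C_mul]
    congr 1
    ring
  refine mul_left_cancel₀ two_pow_ne_zero ?_
  rw [h, chebyshevT_eq_C_mul_nodal, chebyshevT_eq_C_mul_nodal, mul_sub,
    ← mul_assoc, ← mul_assoc (C _) (C (c / 2)), ← ratio]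
  rfl

end ChebyshevZeros

/-- Interlacing of the zeros `x 0 < x 1 < … < x (n-1)` of `R = T_n - c T_{n-1}` with the
zeros `t` of `T_n` and the zeros `s` of `T_{n-1}` (all listed in increasing order):
if `c > 0` then `t i < x i < s i` for `i = 0, …, n-2` and `t (n-1) < x (n-1)`;
if `c < 0` then `x 0 < t 0` and `s (i-1) < x i < t i` for `i = 1, …, n-1`. -/
theorem chebyshevT_quasiOrthogonal_interlacing (n : ℕ) (hn : 2 ≤ n) (c : ℝ) (hc : c ≠ 0)
    (R : Polynomial ℝ)
    (hR : R = Polynomial.Chebyshev.T ℝ n - C c * Polynomial.Chebyshev.T ℝ ((n : ℤ) - 1))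
    (x : ℕ → ℝ) (hmono : ∀ i j, i < j → j < n → x i < x j)
    (hx : R = C ((2 : ℝ) ^ (n - 1)) * ∏ i ∈ Finset.range n, (X - C (x i)))
    (t s : ℕ → ℝ)
    (ht : ∀ i, t i = Real.cos (((2 * (n - i) - 1 : ℕ) : ℝ) * Real.pi / (2 * n)))
    (hs : ∀ i, s i = Real.cos (((2 * (n - 1 - i) - 1 : ℕ) : ℝ) * Real.pi / (2 * (n - 1)))) :
    (0 < c → (∀ i, i < n - 1 → t i < x i ∧ x i < s i) ∧ t (n - 1) < x (n - 1)) ∧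
    (c < 0 → x 0 < t 0 ∧ ∀ i, 1 ≤ i → i < n → s (i - 1) < x i ∧ x i < t i) := by
  obtain ⟨m, rfl⟩ : ∃ m, n = m + 2 := ⟨n - 2, by lia⟩
  obtain rfl : t = chebyshevTZero (m + 2) := funext ht
  obtain rfl : s = chebyshevTZero (m + 1) := funext fun i => by
    rw [hs, chebyshevTZero, show ((m + 2 : ℕ) : ℝ) - 1 = (m + 1 : ℕ) by push_cast; ring]
    rfl
  have cast_pred : ((m + 2 : ℕ) : ℤ) - 1 = (m + 1 : ℕ) := by push_cast; ring
  rw [cast_pred] at hR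
  have monic_relation := nodal_eq_of_chebyshevT_sub (hx.symm.trans hR)
  have x_mono : MonotoneOn x (Set.Iic (m + 1)) :=
    StrictMonoOn.monotoneOn fun i _ j hj hij => hmono i j hij (Nat.lt_succ_of_le hj)
  have zeros_interlace := strictlyInterlace_chebyshevTZero (m + 1)
  refine ⟨fun c_pos => ?_, fun c_neg => ?_⟩
  · obtain ⟨x_s_interlace, t_lt_x⟩ :=
      zeros_interlace.strictlyInterlace_and_left_lt_of_pos (half_pos c_pos) x_mono monic_relation
    exact ⟨fun i hi => ⟨t_lt_x i hi.le, (x_s_interlace i hi).1⟩, t_lt_x (m + 1) le_rfl⟩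
  · obtain ⟨x_s_interlace, x_lt_t⟩ := zeros_interlace.strictlyInterlace_and_lt_left_of_neg
      (div_neg_of_neg_of_pos c_neg two_pos) x_mono monic_relation
    refine ⟨x_lt_t 0 (Nat.zero_le _), fun i hi hin => ⟨?_, x_lt_t i (Nat.le_of_lt_succ hin)⟩⟩
    obtain ⟨k, rfl⟩ := Nat.exists_eq_add_of_le' hi
    exact (x_s_interlace k (Nat.lt_of_succ_lt_succ hin)).2
end
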